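/- arXiv:2504.12145 — 2 statements merged into one kernel-verified Lean document; each statement's English description precedes it below -/
import Mathlib

section
/- Let f(x) ≠ x be an atom of ℕ₀[x]* with deg(f) ≥ 1. Then f(x) is not a prime element of ℕ₀[x]*. -/
open Polynomial

/-- `f ∈ ℕ₀[x]`: all coefficients of `f` are nonnegative. -/
def NNPoly (f : Polynomial ℤ) : Prop := ∀ n, 0 ≤ f.coeff n

/-- `f ∈ ℕ₀[x]* = ℕ₀[x] \ {0}`. -/
def NNStar (f : Polynomial ℤ) : Prop := NNPoly f ∧ f ≠ 0

/-- `f ∣_ℕ g`: divisibility in the monoid `ℕ₀[x]*`. -/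
def DvdN (f g : Polynomial ℤ) : Prop := ∃ h, NNStar h ∧ g = f * h

/-- `f` is an atom of the monoid `ℕ₀[x]*`. -/
def IsAtomN (f : Polynomial ℤ) : Prop :=
  NNStar f ∧ f ≠ 1 ∧ ∀ g h, NNStar g → NNStar h → f = g * h → g = 1 ∨ h = 1

/-- `f` is a prime element of the monoid `ℕ₀[x]*`. -/
def IsPrimeN (f : Polynomial ℤ) : Prop :=
  IsAtomN f ∧ ∀ g h, NNStar g → NNStar h → DvdN f (g * h) → DvdN f g ∨ DvdN f h

/-! An atom `f ≠ x` has constant term `a > 0`. Let `m = deg f ≥ 1` and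
`q = (a + 1) (1 - x ^ m) + x ^ m * f`. The coefficient of `q` at `x ^ m` is `-1`, so `q ∉ ℕ₀[x]`,
but writing `f = a + t` one finds

* `f * q = f + a * (f - x ^ m) + x ^ m * ((a - 1) * t + t ^ 2)`,
* `(f + 1) * q = (a + 1) * (f - x ^ m + 1) + x ^ m * (a * t + t ^ 2)`,

and both are in `ℕ₀[x]` because `t` and `f - x ^ m` are. Hence `f` divides
`(f * q) * (f + 1) = f * ((f + 1) * q)` in `ℕ₀[x]*`, but it divides neither `f * q`, whose only
cofactor is `q`, nor `f + 1`, since `f` is not a unit of `ℤ[x]`.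
-/

namespace NNPoly

variable {f g : ℤ[X]}

protected lemma add (hf : NNPoly f) (hg : NNPoly g) : NNPoly (f + g) := fun n => by
  rw [coeff_add]
  exact add_nonneg (hf n) (hg n)

protected lemma mul (hf : NNPoly f) (hg : NNPoly g) : NNPoly (f * g) := fun n => by
  rw [coeff_mul]
  exact Finset.sum_nonneg fun _ _ => mul_nonneg (hf _) (hg _)

protected lemma C {c : ℤ} (hc : 0 ≤ c) : NNPoly (C c) := fun n => by
  rw [coeff_C]
  split_ifs <;> simp [hc]

protected lemma one : NNPoly 1 := NNPoly.C zero_le_one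

protected lemma X_pow (n : ℕ) : NNPoly (X ^ n) := fun i => by
  rw [coeff_X_pow]
  split_ifs <;> simp

lemma divX (hf : NNPoly f) : NNPoly f.divX := fun n => by
  rw [coeff_divX]
  exact hf (n + 1)

lemma sub_monomial (hf : NNPoly f) {n : ℕ} {c : ℤ} (hc : c ≤ f.coeff n) :
    NNPoly (f - monomial n c) := fun i => by
  rw [coeff_sub, coeff_monomial]
  split_ifs with hi
  · exact sub_nonneg.2 (hi ▸ hc)
  · exact (sub_zero (f.coeff i)).symm ▸ hf i

lemma sub_C_coeff_zero (hf : NNPoly f) : NNPoly (f - Polynomial.C (f.coeff 0)) :=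
  hf.sub_monomial le_rfl

lemma sub_X_pow (hf : NNPoly f) {n : ℕ} (hn : 0 < f.coeff n) : NNPoly (f - X ^ n) :=
  monomial_one_right_eq_X_pow (R := ℤ) n ▸ hf.sub_monomial hn

end NNPoly

section Divisibility

variable {f g : ℤ[X]}

lemma DvdN.dvd : DvdN f g → f ∣ g
  | ⟨h, _, hfh⟩ => ⟨h, hfh⟩

lemma dvdN_mul_right_iff (hf : f ≠ 0) : DvdN f (f * g) ↔ NNStar g :=
  ⟨fun ⟨_, hh, hgh⟩ => mul_left_cancel₀ hf hgh ▸ hh, fun hg => ⟨g, hg, rfl⟩⟩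

lemma not_dvdN_add_one (hf : ¬ IsUnit f) : ¬ DvdN f (f + 1) := fun h =>
  hf (isUnit_iff_dvd_one.2 ((dvd_add_right dvd_rfl).1 h.dvd))

lemma IsAtomN.coeff_zero_pos (hf : IsAtomN f) (hfX : f ≠ X) : 0 < f.coeff 0 := by
  obtain ⟨⟨hnn, hne⟩, -, hfactor⟩ := hf
  refine (hnn 0).lt_of_ne' fun hzero => ?_
  have hf_eq : f = X * f.divX := by
    simpa only [hzero, map_zero, add_zero] using (X_mul_divX_add f).symm
  have hX : NNStar X := ⟨pow_one (X : ℤ[X]) ▸ NNPoly.X_pow 1, X_ne_zero⟩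
  have hdivX : NNStar f.divX := ⟨hnn.divX, right_ne_zero_of_mul (hf_eq ▸ hne)⟩
  rcases hfactor X f.divX hX hdivX hf_eq with hX_one | hdivX_one
  · exact absurd (hX_one ▸ isUnit_one) not_isUnit_X
  · exact hfX (by rw [hf_eq, hdivX_one, mul_one])

end Divisibility

section SignedCofactor

variable {f : ℤ[X]} {m : ℕ}

/-- For `f ∈ ℕ₀[x]` in which `1` and `x ^ m` occur, `m ≠ 0`, a polynomial with coefficient `-1` at
`x ^ m` whose products with `f` and with `f + 1` nevertheless lie in `ℕ₀[x]`. -/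
noncomputable def signedCofactor (f : ℤ[X]) (m : ℕ) : ℤ[X] :=
  C (f.coeff 0 + 1) * (1 - X ^ m) + X ^ m * f

lemma coeff_signedCofactor_self (hm : m ≠ 0) : (signedCofactor f m).coeff m = -1 := by
  have hcoeff : (X ^ m * f).coeff m = f.coeff 0 := by
    simpa only [zero_add] using coeff_X_pow_mul f m 0
  rw [signedCofactor, coeff_add, hcoeff, coeff_C_mul, coeff_sub, coeff_one, coeff_X_pow_self,
    if_neg hm]
  ring

lemma not_nnPoly_signedCofactor (hm : m ≠ 0) : ¬ NNPoly (signedCofactor f m) := fun h => by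
  have hcoeff := h m
  rw [coeff_signedCofactor_self hm] at hcoeff
  omega

lemma signedCofactor_ne_zero (hm : m ≠ 0) : signedCofactor f m ≠ 0 := fun h => by
  simpa only [h, coeff_zero, zero_eq_neg, one_ne_zero] using coeff_signedCofactor_self (f := f) hm

lemma nnPoly_mul_signedCofactor (hf : NNPoly f) (hzero : 0 < f.coeff 0) (hm : 0 < f.coeff m) :
    NNPoly (f * signedCofactor f m) := by
  set a := f.coeff 0 with ha
  set t := f - C a with ht
  have htail : NNPoly t := hf.sub_C_coeff_zero
  have hexpand : f * signedCofactor f m =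
      f + C a * (f - X ^ m) + X ^ m * (C (a - 1) * t + t * t) := by
    rw [signedCofactor, ← ha, ht, C_add, C_sub, C_1]
    ring
  rw [hexpand]
  exact (hf.add ((NNPoly.C hzero.le).mul (hf.sub_X_pow hm))).add
    ((NNPoly.X_pow m).mul (((NNPoly.C (by omega)).mul htail).add (htail.mul htail)))

lemma nnPoly_add_one_mul_signedCofactor (hf : NNPoly f) (hm : 0 < f.coeff m) :
    NNPoly ((f + 1) * signedCofactor f m) := by
  set a := f.coeff 0 with ha
  set t := f - C a with ht
  have htail : NNPoly t := hf.sub_C_coeff_zero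
  have hconst : NNPoly (C a) := NNPoly.C (hf 0)
  have hexpand : (f + 1) * signedCofactor f m =
      (C a + 1) * (f - X ^ m + 1) + X ^ m * (C a * t + t * t) := by
    rw [signedCofactor, ← ha, ht, C_add, C_1]
    ring
  rw [hexpand]
  exact ((hconst.add .one).mul ((hf.sub_X_pow hm).add .one)).add
    ((NNPoly.X_pow m).mul ((hconst.mul htail).add (htail.mul htail)))

end SignedCofactor

lemma exists_dvdN_mul_not_dvdN {f : ℤ[X]} (hf : NNPoly f) (hzero : 0 < f.coeff 0)
    (hdeg : 0 < f.natDegree) :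
    ∃ g h, NNStar g ∧ NNStar h ∧ DvdN f (g * h) ∧ ¬ DvdN f g ∧ ¬ DvdN f h := by
  have hne : f ≠ 0 := ne_zero_of_natDegree_gt hdeg
  have hlead : 0 < f.coeff f.natDegree := (hf _).lt_of_ne' (leadingCoeff_ne_zero.2 hne)
  have hunit : ¬ IsUnit f := not_isUnit_of_natDegree_pos f hdeg
  have hadd : f + 1 ≠ 0 := fun h => by
    have hcoeff : f.coeff 0 + 1 = 0 := by simpa using congrArg (coeff · 0) h
    omega
  set q := signedCofactor f f.natDegree
  have hq : q ≠ 0 := signedCofactor_ne_zero hdeg.ne'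
  refine ⟨f * q, f + 1, ⟨nnPoly_mul_signedCofactor hf hzero hlead, mul_ne_zero hne hq⟩,
    ⟨hf.add .one, hadd⟩, ?_, ?_, not_dvdN_add_one hunit⟩
  · rw [mul_assoc, mul_comm q, dvdN_mul_right_iff hne]
    exact ⟨nnPoly_add_one_mul_signedCofactor hf hlead, mul_ne_zero hadd hq⟩
  · rw [dvdN_mul_right_iff hne]
    exact fun h => not_nnPoly_signedCofactor hdeg.ne' h.1

/-- If `f ≠ x` is an atom of `ℕ₀[x]*` with `deg f ≥ 1`, then `f` is not a prime element
of `ℕ₀[x]*`. -/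
theorem stmt4 (f : Polynomial ℤ) (hf : IsAtomN f) (hfx : f ≠ X) (hdeg : 1 ≤ f.natDegree) :
    ¬ IsPrimeN f := by
  rintro ⟨-, hprime⟩
  obtain ⟨g, h, hg, hh, hdvd, hfg, hfh⟩ :=
    exists_dvdN_mul_not_dvdN hf.1.1 (hf.coeff_zero_pos hfx) hdeg
  exact (hprime g h hg hh hdvd).elim hfg hfh
end

section
/- Let f(x) := x⁴ + 2x³ − x² + 4x + 2 ∈ ℤ[x]. Then f(x) ∉ ℕ₀[x], while f(x)·(x+1) = x⁵ + 3x⁴ + x³ + 3x² + 6x + 2 ∈ ℕ₀[x]* and f(x)² = x⁸ + 4x⁷ + 2x⁶ + 4x⁵ + 21x⁴ + 12x² + 16x + 4 ∈ ℕ₀[x]*. Consequently, the monoid ℕ₀[x]* is not root closed: there exists an element q of the quotient group of ℕ₀[x]* with q ∉ ℕ₀[x]* but q² ∈ ℕ₀[x]*. -/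
open Polynomial

/-- Kainrath's example polynomial `f(x) = x⁴ + 2x³ - x² + 4x + 2`. -/
noncomputable def fK : Polynomial ℤ := X ^ 4 + 2 * X ^ 3 - X ^ 2 + 4 * X + 2

section Fractions

variable {M : Type*} [CommMonoid M] {S : Set M} {f g : M} {n : ℕ}

-- The fraction is `(f * g) / g`; cancelling `g` shows that `f` is its only value in `M`.
theorem exists_fraction_notMem_of_pow_mem (hg : g ∈ S) (hg_reg : IsLeftRegular g)
    (hfg : f * g ∈ S) (hf : f ∉ S) (hf_pow : f ^ n ∈ S) :
    ∃ a b : M, a ∈ S ∧ b ∈ S ∧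
      (∃ c, c ∈ S ∧ a ^ n = b ^ n * c) ∧ ¬ (∃ c, c ∈ S ∧ a = b * c) := by
  refine ⟨f * g, g, hfg, hg, ⟨f ^ n, hf_pow, by rw [mul_pow, mul_comm]⟩, ?_⟩
  rintro ⟨c, hc, h⟩
  have hfc : f = c := hg_reg ((mul_comm g f).trans h)
  exact hf (hfc ▸ hc)

end Fractions

theorem nnPoly_iff_mem_lifts {p : ℤ[X]} : NNPoly p ↔ p ∈ lifts (Nat.castRingHom ℤ) := by
  rw [lifts_iff_coeff_lifts]
  exact forall_congr' fun _ =>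
    ⟨fun h => ⟨_, Int.toNat_of_nonneg h⟩, fun ⟨m, hm⟩ => hm ▸ Int.natCast_nonneg m⟩

theorem ne_zero_of_not_nnPoly {p : ℤ[X]} (hp : ¬ NNPoly p) : p ≠ 0 := by
  rintro rfl
  exact hp (nnPoly_iff_mem_lifts.mpr (zero_mem _))

theorem nnStar_X_add_one : NNStar (X + 1) :=
  ⟨nnPoly_iff_mem_lifts.mpr (add_mem (X_mem_lifts _) (one_mem _)), X_add_C_ne_zero 1⟩

theorem coeff_two_fK : fK.coeff 2 = -1 := by
  simp [fK, coeff_X, coeff_X_pow, coeff_ofNat_mul]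

theorem not_nnPoly_fK : ¬ NNPoly fK := fun h => by
  simpa [coeff_two_fK] using h 2

theorem fK_mul_X_add_one :
    fK * (X + 1) = X ^ 5 + 3 * X ^ 4 + X ^ 3 + 3 * X ^ 2 + 6 * X + 2 := by
  unfold fK
  ring

theorem fK_sq :
    fK ^ 2 = X ^ 8 + 4 * X ^ 7 + 2 * X ^ 6 + 4 * X ^ 5 + 21 * X ^ 4 + 12 * X ^ 2
      + 16 * X + 4 := by
  unfold fK
  ring

theorem nnStar_fK_mul_X_add_one : NNStar (fK * (X + 1)) := by
  refine ⟨nnPoly_iff_mem_lifts.mpr ?_,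
    mul_ne_zero (ne_zero_of_not_nnPoly not_nnPoly_fK) nnStar_X_add_one.2⟩
  rw [fK_mul_X_add_one, mem_lifts]
  exact ⟨X ^ 5 + 3 * X ^ 4 + X ^ 3 + 3 * X ^ 2 + 6 * X + 2, by simp⟩

theorem nnStar_fK_sq : NNStar (fK ^ 2) := by
  refine ⟨nnPoly_iff_mem_lifts.mpr ?_, pow_ne_zero 2 (ne_zero_of_not_nnPoly not_nnPoly_fK)⟩
  rw [fK_sq, mem_lifts]
  exact ⟨X ^ 8 + 4 * X ^ 7 + 2 * X ^ 6 + 4 * X ^ 5 + 21 * X ^ 4 + 12 * X ^ 2 + 16 * X + 4,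
    by simp⟩

/-- `f = x⁴ + 2x³ - x² + 4x + 2 ∉ ℕ₀[x]`, while
`f·(x+1) = x⁵ + 3x⁴ + x³ + 3x² + 6x + 2 ∈ ℕ₀[x]*` and
`f² = x⁸ + 4x⁷ + 2x⁶ + 4x⁵ + 21x⁴ + 12x² + 16x + 4 ∈ ℕ₀[x]*`. Consequently `ℕ₀[x]*` is
not root closed: there is an element `q = a/b` of its quotient group with `q ∉ ℕ₀[x]*`
but `q² ∈ ℕ₀[x]*`. -/
theorem stmt14 :
    ¬ NNPoly fK ∧
    fK * (X + 1) = X ^ 5 + 3 * X ^ 4 + X ^ 3 + 3 * X ^ 2 + 6 * X + 2 ∧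
    NNStar (fK * (X + 1)) ∧
    fK ^ 2 = X ^ 8 + 4 * X ^ 7 + 2 * X ^ 6 + 4 * X ^ 5 + 21 * X ^ 4 + 12 * X ^ 2
      + 16 * X + 4 ∧
    NNStar (fK ^ 2) ∧
    ∃ a b : Polynomial ℤ, NNStar a ∧ NNStar b ∧
      (∃ c, NNStar c ∧ a ^ 2 = b ^ 2 * c) ∧ ¬ (∃ c, NNStar c ∧ a = b * c) := by
  have X_add_one_regular : IsLeftRegular (X + 1 : ℤ[X]) :=
    (IsRegular.of_ne_zero nnStar_X_add_one.2).left
  have fK_notMem : fK ∉ {p | NNStar p} := fun h => not_nnPoly_fK h.1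
  exact ⟨not_nnPoly_fK, fK_mul_X_add_one, nnStar_fK_mul_X_add_one, fK_sq, nnStar_fK_sq,
    exists_fraction_notMem_of_pow_mem nnStar_X_add_one X_add_one_regular
      nnStar_fK_mul_X_add_one fK_notMem nnStar_fK_sq⟩
end
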